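/- Assume (μ,σ,f) satisfies (k-MLLC) for some k ∈ ℕ₀. Then for every i ∈ {0,…,k} the function φ⁽ⁱ⁾ is well-defined on Θ_i (all partial derivatives occurring in the recursive definition exist classically) and is k−i times classically differentiable with respect to (x, y⁽⁰⁾, z⁽⁰⁾, …, y⁽ⁱ⁾, z⁽ⁱ⁾). Moreover, for i ≥ 1, the function φ⁽ⁱ⁾ and all of these derivatives up to order k−i are bounded on every set of the form [0,T]×ℝⁿ×ℝᵐ×A×∏_{l=1}^{i}(B_l×C_l), where A ⊆ ℝ^{m×d}, B_l ⊆ ℝ^{m×_l n} and C_l ⊆ ℝ^{(m×d)×_l n} are compact sets such that B₁ is contained in the open ball of radius L_{σ,z}^{-1} in ℝ^{m×n} with respect to the operator norm. -/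

import Mathlib

namespace DecouplingFBSDE

/-! ### Generalized matrices

`Tens n m k` is the space `ℝ^{m×_k n}` of real valued maps on `[m]×[n]^k`;
`TensZ n m d k` is the space `ℝ^{(m×d)×_k n}` of real valued maps on `[m]×[d]×[n]^k`. -/

/-- `ℝ^{m×_k n}`. -/
abbrev Tens (n m k : ℕ) : Type := Fin m → (Fin k → Fin n) → ℝ

/-- `ℝ^{(m×d)×_k n}`. -/
abbrev TensZ (n m d k : ℕ) : Type := Fin m → Fin d → (Fin k → Fin n) → ℝ

/-- `ℝ^{n×d}`, the space of values of `σ`. -/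
abbrev Sig (n d : ℕ) : Type := Fin n → Fin d → ℝ

/-- The space of the variables `(x, y⁽⁰⁾, z⁽⁰⁾)` (identifying `ℝᵐ` with `Tens n m 0`
and `ℝ^{m×d}` with `TensZ n m d 0`). -/
abbrev Arg (n m d : ℕ) : Type := (Fin n → ℝ) × Tens n m 0 × TensZ n m d 0

variable {n m d : ℕ}

/-- Frobenius norm on `Tens n m k`. -/
noncomputable def frobT {k : ℕ} (y : Tens n m k) : ℝ :=
  Real.sqrt (∑ a, ∑ c, (y a c) ^ 2)

/-- Frobenius norm on `TensZ n m d k`. -/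
noncomputable def frobTZ {k : ℕ} (z : TensZ n m d k) : ℝ :=
  Real.sqrt (∑ a, ∑ b, ∑ c, (z a b c) ^ 2)

/-- Frobenius norm on `ℝ^{n×d}`. -/
noncomputable def frobS (s : Sig n d) : ℝ :=
  Real.sqrt (∑ i, ∑ j, (s i j) ^ 2)

/-- `y⁽¹⁾ ∈ ℝ^{m×_1 n}` as an ordinary `m×n` matrix. -/
def mat1 (v : Tens n m 1) : Matrix (Fin m) (Fin n) ℝ :=
  Matrix.of fun a i => v a (fun _ => i)

/-- Operator norm of `y⁽¹⁾ ∈ ℝ^{m×n}` with respect to the Euclidean norms. -/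
noncomputable def opN (v : Tens n m 1) : ℝ :=
  ‖LinearMap.toContinuousLinearMap (Matrix.toEuclideanLin (mat1 v))‖

/-- Standard basis vector of `ℝⁿ`. -/
def eX (c : Fin n) : Fin n → ℝ := Pi.single c 1

/-- Standard basis vector of `ℝᵐ ≅ Tens n m 0`. -/
def eY (a : Fin m) : Tens n m 0 := fun a' _ => if a' = a then 1 else 0

/-- Standard basis element of `ℝ^{m×d} ≅ TensZ n m d 0`. -/
def eZ (a : Fin m) (b : Fin d) : TensZ n m d 0 :=
  fun a' b' _ => if a' = a ∧ b' = b then 1 else 0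

/-- `σ_x(θ)` applied to a direction `v ∈ ℝⁿ`. -/
noncomputable def sx (σ : ℝ → Arg n m d → Sig n d) (t : ℝ) (p : Arg n m d)
    (v : Fin n → ℝ) : Sig n d := fderiv ℝ (σ t) p (v, 0, 0)

/-- `σ_y(θ)` applied to a direction `w ∈ ℝᵐ`. -/
noncomputable def sy (σ : ℝ → Arg n m d → Sig n d) (t : ℝ) (p : Arg n m d)
    (w : Tens n m 0) : Sig n d := fderiv ℝ (σ t) p (0, w, 0)

/-- `σ_z(θ)` applied to a direction `ζ ∈ ℝ^{m×d}`. -/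
noncomputable def sz (σ : ℝ → Arg n m d → Sig n d) (t : ℝ) (p : Arg n m d)
    (ζ : TensZ n m d 0) : Sig n d := fderiv ℝ (σ t) p (0, 0, ζ)

/-- `μ_x(θ)` applied to a direction `v ∈ ℝⁿ`. -/
noncomputable def mx (μ : ℝ → Arg n m d → (Fin n → ℝ)) (t : ℝ) (p : Arg n m d)
    (v : Fin n → ℝ) : Fin n → ℝ := fderiv ℝ (μ t) p (v, 0, 0)

/-- `μ_y(θ)` applied to a direction `w ∈ ℝᵐ`. -/
noncomputable def my (μ : ℝ → Arg n m d → (Fin n → ℝ)) (t : ℝ) (p : Arg n m d)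
    (w : Tens n m 0) : Fin n → ℝ := fderiv ℝ (μ t) p (0, w, 0)

/-- `μ_z(θ)` applied to a direction `ζ ∈ ℝ^{m×d}`. -/
noncomputable def mz (μ : ℝ → Arg n m d → (Fin n → ℝ)) (t : ℝ) (p : Arg n m d)
    (ζ : TensZ n m d 0) : Fin n → ℝ := fderiv ℝ (μ t) p (0, 0, ζ)

/-- The generalized matrix `Id_{m×d} − y⁽¹⁾σ_z(θ) ∈ ℝ^{(m×d)×(m×d)}`, viewed as an
`(m·d)×(m·d)` matrix. -/
noncomputable def Gmat (σ : ℝ → Arg n m d → Sig n d) (t : ℝ) (p : Arg n m d)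
    (y1 : Tens n m 1) : Matrix (Fin m × Fin d) (Fin m × Fin d) ℝ :=
  1 - Matrix.of fun ab pq => ∑ i, mat1 y1 ab.1 i * sz σ t p (eZ pq.1 pq.2) i ab.2

/-- `y⁽¹⁾σ_x(θ) + y⁽¹⁾σ_y(θ)y⁽¹⁾ + z⁽¹⁾ ∈ ℝ^{(m×d)×n}`. -/
noncomputable def Rh (σ : ℝ → Arg n m d → Sig n d) (t : ℝ) (p : Arg n m d)
    (y1 : Tens n m 1) (z1 : TensZ n m d 1) : TensZ n m d 1 :=
  fun a b c =>
    (∑ i, mat1 y1 a i * sx σ t p (eX (c 0)) i b)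
    + (∑ j, (∑ i, mat1 y1 a i * sy σ t p (eY j) i b) * mat1 y1 j (c 0))
    + z1 a b c

/-- `h⁽¹⁾(θ₁) := (Id_{m×d} − y⁽¹⁾σ_z(θ))⁻¹ (y⁽¹⁾σ_x(θ) + y⁽¹⁾σ_y(θ)y⁽¹⁾ + z⁽¹⁾)`. -/
noncomputable def h1 (σ : ℝ → Arg n m d → Sig n d) (t : ℝ) (p : Arg n m d)
    (y1 : Tens n m 1) (z1 : TensZ n m d 1) : TensZ n m d 1 :=
  fun a b c =>
    ∑ pq : Fin m × Fin d, (Gmat σ t p y1)⁻¹ (a, b) pq * Rh σ t p y1 z1 pq.1 pq.2 c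

/-- The `n×n` matrix `σ⁽ᵇ⁾_x(θ) + σ⁽ᵇ⁾_y(θ)y⁽¹⁾ + σ⁽ᵇ⁾_z(θ)h⁽¹⁾(θ₁)` for the `b`-th
column of `σ`. -/
noncomputable def Bmat (σ : ℝ → Arg n m d → Sig n d) (t : ℝ) (p : Arg n m d)
    (y1 : Tens n m 1) (z1 : TensZ n m d 1) (b : Fin d) : Fin n → Fin n → ℝ :=
  fun i c =>
    sx σ t p (eX c) i b
    + (∑ a, sy σ t p (eY a) i b * mat1 y1 a c)
    + ∑ pq : Fin m × Fin d,
        sz σ t p (eZ pq.1 pq.2) i b * h1 σ t p y1 z1 pq.1 pq.2 (fun _ => c)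

/-- The `n×n` matrix `μ_x(θ) + μ_y(θ)y⁽¹⁾ + μ_z(θ)h⁽¹⁾(θ₁)`. -/
noncomputable def Amat (μ : ℝ → Arg n m d → (Fin n → ℝ)) (σ : ℝ → Arg n m d → Sig n d)
    (t : ℝ) (p : Arg n m d) (y1 : Tens n m 1) (z1 : TensZ n m d 1) :
    Fin n → Fin n → ℝ :=
  fun i c =>
    mx μ t p (eX c) i
    + (∑ a, my μ t p (eY a) i * mat1 y1 a c)
    + ∑ pq : Fin m × Fin d,
        mz μ t p (eZ pq.1 pq.2) i * h1 σ t p y1 z1 pq.1 pq.2 (fun _ => c)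

/-- Product of a generalized matrix `y ∈ ℝ^{m×_{k+1} n}` with an `n×n` matrix `A`,
contracting the trailing index of `y` with the first index of `A`. -/
def mulRight {k : ℕ} (y : Tens n m (k + 1)) (A : Fin n → Fin n → ℝ) :
    Tens n m (k + 1) :=
  fun a c => ∑ j, y a (Fin.snoc (Fin.init c) j) * A j (c (Fin.last k))

/-- `h⁽ᵏ⁾(θ_k)` for `k ≥ 2`:
`h⁽ᵏ'ʲ⁾(θ_k) = z⁽ᵏ'ʲ⁾ + y⁽ᵏ⁾(σ⁽ʲ⁾_x(θ) + σ⁽ʲ⁾_y(θ)y⁽¹⁾ + σ⁽ʲ⁾_z(θ)h⁽¹⁾(θ₁))`. -/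
noncomputable def hK (σ : ℝ → Arg n m d → Sig n d) (t : ℝ) (p : Arg n m d)
    (y1 : Tens n m 1) (z1 : TensZ n m d 1) {k : ℕ}
    (yk : Tens n m (k + 1)) (zk : TensZ n m d (k + 1)) : TensZ n m d (k + 1) :=
  fun a b c => zk a b c + mulRight yk (Bmat σ t p y1 z1 b) a c

/-- `h⁽ᵏ⁾` for every `k ≥ 1`: `h⁽¹⁾` for `k = 1` and the affine formula for `k ≥ 2`. -/
noncomputable def hGen (σ : ℝ → Arg n m d → Sig n d) (t : ℝ) (p : Arg n m d)
    (y1 : Tens n m 1) (z1 : TensZ n m d 1) :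
    {k : ℕ} → Tens n m (k + 1) → TensZ n m d (k + 1) → TensZ n m d (k + 1)
  | 0, yk, zk => h1 σ t p yk zk
  | _ + 1, yk, zk => hK σ t p y1 z1 yk zk

/-- The state space `(x, y⁽⁰⁾, z⁽⁰⁾, …, y⁽ⁱ⁾, z⁽ⁱ⁾)` of the spatial variables
of `Θ_i`. -/
abbrev EE (n m d i : ℕ) : Type :=
  (Fin n → ℝ) × ((j : Fin (i + 1)) → Tens n m j) × ((j : Fin (i + 1)) → TensZ n m d j)

/-- `φ_x(θ) ∈ ℝ^{m×_i n×n}`, reassembled as an element of `ℝ^{m×_{i+1} n}` (the trailing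
index runs through the `x`-directions). -/
def appX {i : ℕ} (L : (Fin n → ℝ) → Tens n m i) : Tens n m (i + 1) :=
  fun a c => L (eX (c (Fin.last i))) a (Fin.init c)

/-- Product `φ_{y⁽ʲ⁾}(θ)·y`, applying the linear map `L` slice-wise in the trailing
index of `y ∈ ℝ^{m×_{j+1} n}`. -/
def appY {j i : ℕ} (L : Tens n m j → Tens n m i) (y : Tens n m (j + 1)) :
    Tens n m (i + 1) :=
  fun a c => L (fun a' c' => y a' (Fin.snoc c' (c (Fin.last i)))) a (Fin.init c)

/-- Product `φ_{z⁽ʲ⁾}(θ)·z`, applying the linear map `L` slice-wise in the trailing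
index of `z ∈ ℝ^{(m×d)×_{j+1} n}`. -/
def appZ {j i : ℕ} (L : TensZ n m d j → Tens n m i) (z : TensZ n m d (j + 1)) :
    Tens n m (i + 1) :=
  fun a c => L (fun a' b' c' => z a' b' (Fin.snoc c' (c (Fin.last i)))) a (Fin.init c)

/-- Partial derivative in the direction of `x`, extracted from a total derivative. -/
noncomputable def Dx {i : ℕ} (D : EE n m d i →L[ℝ] Tens n m i) :
    (Fin n → ℝ) → Tens n m i :=
  fun v => D (v, 0, 0)

/-- Partial derivative in the direction of `y⁽ʲ⁾`, extracted from a total derivative. -/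
noncomputable def Dyp {i : ℕ} (D : EE n m d i →L[ℝ] Tens n m i) (j : Fin (i + 1)) :
    Tens n m j → Tens n m i :=
  fun w => D (0, Pi.single j w, 0)

/-- Partial derivative in the direction of `z⁽ʲ⁾`, extracted from a total derivative. -/
noncomputable def Dzp {i : ℕ} (D : EE n m d i →L[ℝ] Tens n m i) (j : Fin (i + 1)) :
    TensZ n m d j → Tens n m i :=
  fun w => D (0, 0, Pi.single j w)

/-- The type of the function `φ⁽ⁱ⁾`. -/
abbrev PhiFun (n m d i : ℕ) : Type := ℝ → EE n m d i → Tens n m i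

/-- The right hand side of the recursion defining `φ⁽ⁱ⁺¹⁾` from the derivative `D`
of `φ⁽ⁱ⁾`:
`φ⁽ⁱ⁺¹⁾ = φ⁽ⁱ⁾_x + Σ_j (φ⁽ⁱ⁾_{y⁽ʲ⁾}y⁽ʲ⁺¹⁾ + φ⁽ⁱ⁾_{z⁽ʲ⁾}h⁽ʲ⁺¹⁾)
         − y⁽ⁱ⁺¹⁾(μ_x + μ_y y⁽¹⁾ + μ_z h⁽¹⁾) − Σ_b z⁽ⁱ⁺¹'ᵇ⁾(σ⁽ᵇ⁾_x + σ⁽ᵇ⁾_y y⁽¹⁾ + σ⁽ᵇ⁾_z h⁽¹⁾)`. -/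
noncomputable def phiStep {i : ℕ} (μ : ℝ → Arg n m d → (Fin n → ℝ))
    (σ : ℝ → Arg n m d → Sig n d) (t : ℝ) (D : EE n m d i →L[ℝ] Tens n m i)
    (x : Fin n → ℝ) (Y : (j : Fin (i + 2)) → Tens n m j)
    (Z : (j : Fin (i + 2)) → TensZ n m d j) : Tens n m (i + 1) :=
  (appX (Dx D)
      + ∑ j : Fin (i + 1),
          (appY (Dyp D j) (Y j.succ)
            + appZ (Dzp D j)
                (hGen σ t (x, Y ⟨0, by omega⟩, Z ⟨0, by omega⟩)
                  (Y ⟨1, by omega⟩) (Z ⟨1, by omega⟩) (Y j.succ) (Z j.succ))))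
    - mulRight (Y (Fin.last (i + 1)))
        (Amat μ σ t (x, Y ⟨0, by omega⟩, Z ⟨0, by omega⟩)
          (Y ⟨1, by omega⟩) (Z ⟨1, by omega⟩))
    - ∑ b : Fin d,
        mulRight (fun a c => Z (Fin.last (i + 1)) a b c)
          (Bmat σ t (x, Y ⟨0, by omega⟩, Z ⟨0, by omega⟩)
            (Y ⟨1, by omega⟩) (Z ⟨1, by omega⟩) b)

/-- The family `(φ⁽⁰⁾, …, φ⁽ᵏ⁾)` satisfies the defining recursion of the generators
of the backward equations for the spatial derivatives of the decoupling field: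
`φ⁽⁰⁾ = f` and, at every point of `Θ_{i+1}`, `φ⁽ⁱ⁾` is (classically) differentiable
in `(x, y⁽⁰⁾, z⁽⁰⁾, …, y⁽ⁱ⁾, z⁽ⁱ⁾)` and `φ⁽ⁱ⁺¹⁾` is given by the recursion formula. -/
structure IsPhiChain (n m d k : ℕ) (T Lz : ℝ)
    (μ : ℝ → Arg n m d → (Fin n → ℝ)) (σ : ℝ → Arg n m d → Sig n d)
    (f : ℝ → Arg n m d → Tens n m 0)
    (φ : (i : ℕ) → PhiFun n m d i) : Prop where
  base : ∀ t ∈ Set.Icc (0:ℝ) T, ∀ p : EE n m d 0,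
    φ 0 t p = f t (p.1, p.2.1 ⟨0, by omega⟩, p.2.2 ⟨0, by omega⟩)
  step : ∀ i : ℕ, i + 1 ≤ k → ∀ t ∈ Set.Icc (0:ℝ) T,
    ∀ (x : Fin n → ℝ) (Y : (j : Fin (i + 2)) → Tens n m j)
      (Z : (j : Fin (i + 2)) → TensZ n m d j),
      Lz * opN (Y ⟨1, by omega⟩) < 1 →
      ∃ D : EE n m d i →L[ℝ] Tens n m i,
        HasFDerivAt (φ i t) D (x, fun j => Y j.castSucc, fun j => Z j.castSucc) ∧
        φ (i + 1) t (x, Y, Z) = phiStep μ σ t D x Y Z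

/-- The modified local Lipschitz conditions `(k-MLLC)` for `(μ,σ,f)`:
`μ, σ, f` are deterministic, `k` times classically differentiable in `(x,y,z)`,
they and their derivatives up to order `k` are Lipschitz continuous in `(x,y,z)`
on sets with bounded `z`-component (uniformly in `t ∈ [0,T]`),
`‖μ(·,0,0,0)‖_∞, ‖f(·,0,0,0)‖_∞, ‖σ(·,·,·,0)‖_∞ < ∞`, and `σ` is Lipschitz
continuous in `z` with constant `Lz` with respect to Frobenius norms. -/
structure MLLC (n m d k : ℕ) (T : ℝ)
    (μ : ℝ → Arg n m d → (Fin n → ℝ)) (σ : ℝ → Arg n m d → Sig n d)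
    (f : ℝ → Arg n m d → Tens n m 0) (Lz : ℝ) : Prop where
  smooth_mu : ∀ t ∈ Set.Icc (0:ℝ) T, ContDiff ℝ (k : ℕ∞) (μ t)
  smooth_sigma : ∀ t ∈ Set.Icc (0:ℝ) T, ContDiff ℝ (k : ℕ∞) (σ t)
  smooth_f : ∀ t ∈ Set.Icc (0:ℝ) T, ContDiff ℝ (k : ℕ∞) (f t)
  lipschitz_on_bounded : ∀ R : ℝ, ∃ L : NNReal, ∀ t ∈ Set.Icc (0:ℝ) T, ∀ j : ℕ, j ≤ k →
    LipschitzOnWith L (iteratedFDeriv ℝ j (μ t)) {p : Arg n m d | frobTZ p.2.2 ≤ R} ∧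
    LipschitzOnWith L (iteratedFDeriv ℝ j (σ t)) {p : Arg n m d | frobTZ p.2.2 ≤ R} ∧
    LipschitzOnWith L (iteratedFDeriv ℝ j (f t)) {p : Arg n m d | frobTZ p.2.2 ≤ R}
  bounded_at_zero : ∃ C : ℝ, ∀ t ∈ Set.Icc (0:ℝ) T,
    ‖μ t 0‖ ≤ C ∧ ‖f t 0‖ ≤ C ∧ ∀ (x : Fin n → ℝ) (y : Tens n m 0), ‖σ t (x, y, 0)‖ ≤ C
  lz_nonneg : 0 ≤ Lz
  lz_lipschitz : ∀ t ∈ Set.Icc (0:ℝ) T, ∀ (x : Fin n → ℝ) (y : Tens n m 0)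
    (z z' : TensZ n m d 0),
    frobS (σ t (x, y, z) - σ t (x, y, z')) ≤ Lz * frobTZ (z - z')


/-! ### Calculus of uniformly bounded smooth families -/

section NiceCalc

/-- An open set together with a family of subsets. -/
structure Dm (E κ : Type*) [NormedAddCommGroup E] where
  U : Set E
  S : κ → Set E
  op : IsOpen U
  sub : ∀ s, S s ⊆ U

/-- Families which are `r` times differentiable on `U` with derivatives bounded on each `S s`. -/
structure Nice {ι κ E G : Type*} [NormedAddCommGroup E] [NormedSpace ℝ E]
    [NormedAddCommGroup G] [NormedSpace ℝ G] (r : ℕ) (W : Dm E κ) (F : ι → E → G) : Prop where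
  smooth : ∀ t, ContDiffOn ℝ r (F t) W.U
  bdd : ∀ s, ∃ M : ℝ, ∀ t, ∀ p ∈ W.S s, ∀ j ≤ r, ‖iteratedFDeriv ℝ j (F t) p‖ ≤ M

variable {ι κ κ' E E' G H : Type*} [NormedAddCommGroup E] [NormedSpace ℝ E]
  [NormedAddCommGroup E'] [NormedSpace ℝ E']
  [NormedAddCommGroup G] [NormedSpace ℝ G] [NormedAddCommGroup H] [NormedSpace ℝ H]
  {r : ℕ} {W : Dm E κ}

theorem Dm.nhds (W : Dm E κ) {s : κ} {p : E} (hp : p ∈ W.S s) : W.U ∈ nhds p :=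
  W.op.mem_nhds (W.sub s hp)

theorem Nice.cda {F : ι → E → G} (h : Nice r W F) (t : ι) {s : κ} {p : E} (hp : p ∈ W.S s)
    {j : ℕ} (hj : j ≤ r) : ContDiffAt ℝ j (F t) p :=
  ((h.smooth t).contDiffAt (W.nhds hp)).of_le (by exact_mod_cast hj)

theorem Nice.le {F : ι → E → G} (h : Nice r W F) {r' : ℕ} (hr : r' ≤ r) : Nice r' W F :=
  ⟨fun t => (h.smooth t).of_le (by exact_mod_cast hr), fun s => by
    obtain ⟨M, hM⟩ := h.bdd s
    exact ⟨M, fun t p hp j hj => hM t p hp j (hj.trans hr)⟩⟩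

theorem Nice.add {F F' : ι → E → G} (h : Nice r W F) (h' : Nice r W F') :
    Nice r W (fun t p => F t p + F' t p) := by
  refine ⟨fun t => (h.smooth t).add (h'.smooth t), fun s => ?_⟩
  obtain ⟨M, hM⟩ := h.bdd s
  obtain ⟨M', hM'⟩ := h'.bdd s
  refine ⟨M + M', fun t p hp j hj => ?_⟩
  have := iteratedFDeriv_add_apply (h.cda t hp hj) (h'.cda t hp hj)
  change ‖iteratedFDeriv ℝ j (F t + F' t) p‖ ≤ _
  rw [this]
  exact (norm_add_le _ _).trans (add_le_add (hM t p hp j hj) (hM' t p hp j hj))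

theorem Nice.clm {F : ι → E → G} (h : Nice r W F) (L : G →L[ℝ] H) :
    Nice r W (fun t p => L (F t p)) := by
  refine ⟨fun t => L.contDiff.comp_contDiffOn (h.smooth t), fun s => ?_⟩
  obtain ⟨M, hM⟩ := h.bdd s
  refine ⟨‖L‖ * M, fun t p hp j hj => ?_⟩
  exact (L.norm_iteratedFDeriv_comp_left (h.cda t hp hj) le_rfl).trans
    (mul_le_mul_of_nonneg_left (hM t p hp j hj) (norm_nonneg _))

theorem Nice.const (g : G) : Nice r W (fun (_ : ι) _ => g) := by
  refine ⟨fun t => contDiffOn_const, fun s => ⟨‖g‖, fun t p hp j hj => ?_⟩⟩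
  rcases Nat.eq_zero_or_pos j with rfl | hj
  · simp
  · rw [iteratedFDeriv_const_of_ne hj.ne']; simp

theorem Nice.sum {α : Type*} {F : α → ι → E → G} (A : Finset α)
    (h : ∀ a ∈ A, Nice r W (F a)) :
    Nice r W (fun t p => ∑ a ∈ A, F a t p) := by
  classical
  induction A using Finset.induction_on with
  | empty => simpa using Nice.const (0 : G)
  | insert a A ha ih =>
    simp only [Finset.sum_insert ha]
    exact (h a (by simp)).add (ih fun b hb => h b (by simp [hb]))

theorem Nice.pi {α : Type*} [Fintype α] {Gs : α → Type*} [∀ a, NormedAddCommGroup (Gs a)]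
    [∀ a, NormedSpace ℝ (Gs a)] {F : ι → E → (a : α) → Gs a}
    (h : ∀ a, Nice r W (fun t p => F t p a)) : Nice r W F := by
  classical
  have := Nice.sum (Finset.univ : Finset α) (F := fun a t p => Pi.single a (F t p a))
    (W := W) (r := r) (fun a _ => (h a).clm (ContinuousLinearMap.single ℝ Gs a))
  convert this using 3 with t p
  exact (Finset.univ_sum_single _).symm

theorem Nice.app {α : Type*} [Fintype α] {Gs : α → Type*} [∀ a, NormedAddCommGroup (Gs a)]
    [∀ a, NormedSpace ℝ (Gs a)] {F : ι → E → (a : α) → Gs a}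
    (h : Nice r W F) (a : α) : Nice r W (fun t p => F t p a) :=
  h.clm (ContinuousLinearMap.proj (R := ℝ) (φ := Gs) a)

theorem Nice.prodMk {F : ι → E → G} {F' : ι → E → H} (h : Nice r W F) (h' : Nice r W F') :
    Nice r W (fun t p => (F t p, F' t p)) := by
  have := (h.clm (ContinuousLinearMap.inl ℝ G H)).add (h'.clm (ContinuousLinearMap.inr ℝ G H))
  simpa using this

theorem Nice.comp {F : ι → E → G} (h : Nice r W F) {g : G → H} {V : Set G} (hV : IsOpen V)
    (hg : ContDiffOn ℝ r g V) (hm : ∀ t, Set.MapsTo (F t) W.U V)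
    (hK : ∀ s, ∃ K ⊆ V, IsCompact K ∧ ∀ t, ∀ p ∈ W.S s, F t p ∈ K) :
    Nice r W (fun t p => g (F t p)) := by
  refine ⟨fun t => hg.comp (h.smooth t) (hm t), fun s => ?_⟩
  obtain ⟨K, hKV, hKc, hFK⟩ := hK s
  obtain ⟨M, hM⟩ := h.bdd s
  have hb : ∀ j : ℕ, ∃ C : ℝ, j ≤ r → ∀ q ∈ K, ‖iteratedFDerivWithin ℝ j g V q‖ ≤ C := by
    intro j
    by_cases hj : j ≤ r
    · obtain ⟨C, hC⟩ := hKc.exists_bound_of_continuousOn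
        ((hg.continuousOn_iteratedFDerivWithin (m := j) (by exact_mod_cast hj)
          hV.uniqueDiffOn).mono hKV)
      exact ⟨C, fun _ => hC⟩
    · exact ⟨0, fun h => absurd h hj⟩
  choose C hC using hb
  set C' := ∑ j ∈ Finset.range (r + 1), |C j| with hC'
  have hCC : ∀ j ≤ r, C j ≤ C' := fun j hj => (le_abs_self _).trans
    (Finset.single_le_sum (f := fun j => |C j|) (fun i _ => abs_nonneg _)
      (Finset.mem_range.2 (Nat.lt_succ_of_le hj)))
  have hC0 : 0 ≤ C' := Finset.sum_nonneg fun i _ => abs_nonneg _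
  set D := max 1 M with hD
  have hD1 : 1 ≤ D := le_max_left _ _
  refine ⟨r.factorial * C' * D ^ r, fun t p hp j hj => ?_⟩
  have hpU := W.sub s hp
  rw [← iteratedFDerivWithin_of_isOpen j W.op hpU]
  refine (norm_iteratedFDerivWithin_comp_le (g := g) (f := F t) hg (h.smooth t)
    (by exact_mod_cast hj) hV.uniqueDiffOn W.op.uniqueDiffOn (hm t) hpU (C := C') (D := D)
    (fun i hi => (hC i (hi.trans hj) _ (hFK t p hp)).trans (hCC i (hi.trans hj)))
    (fun i hi hij => ?_)).trans ?_
  · rw [iteratedFDerivWithin_of_isOpen i W.op hpU]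
    exact (hM t p hp i (hij.trans hj)).trans ((le_max_right _ _).trans
      (le_self_pow₀ hD1 (by omega)))
  · gcongr

theorem Nice.comp' [FiniteDimensional ℝ G] {F : ι → E → G} (h : Nice r W F) {g : G → H}
    (hg : ContDiff ℝ r g) : Nice r W (fun t p => g (F t p)) := by
  have : ProperSpace G := FiniteDimensional.proper_real G
  refine h.comp isOpen_univ hg.contDiffOn (fun t => Set.mapsTo_univ _ _) fun s => ?_
  obtain ⟨M, hM⟩ := h.bdd s
  refine ⟨Metric.closedBall 0 M, Set.subset_univ _, isCompact_closedBall _ _, fun t p hp => ?_⟩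
  simpa using hM t p hp 0 (Nat.zero_le _)

theorem Nice.mul {F F' : ι → E → ℝ} (h : Nice r W F) (h' : Nice r W F') :
    Nice r W (fun t p => F t p * F' t p) :=
  (h.prodMk h').comp' (g := fun q : ℝ × ℝ => q.1 * q.2) (by fun_prop)

theorem Nice.sub {F F' : ι → E → G} (h : Nice r W F) (h' : Nice r W F') :
    Nice r W (fun t p => F t p - F' t p) := by
  have := h.add (h'.clm (-ContinuousLinearMap.id ℝ G))
  simpa [sub_eq_add_neg] using this

theorem Nice.clm_apply [FiniteDimensional ℝ G] [FiniteDimensional ℝ H]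
    {D : ι → E → (G →L[ℝ] H)} {v : ι → E → G} (h : Nice r W D) (h' : Nice r W v) :
    Nice r W (fun t p => D t p (v t p)) :=
  (h.prodMk h').comp' (g := fun q : (G →L[ℝ] H) × G => q.1 q.2)
    (contDiff_fst.clm_apply contDiff_snd)

theorem Nice.fderiv {F : ι → E → G} (h : Nice (r + 1) W F) :
    Nice r W (fun t p => _root_.fderiv ℝ (F t) p) := by
  refine ⟨fun t => (h.smooth t).fderiv_of_isOpen W.op (by norm_cast), fun s => ?_⟩
  obtain ⟨M, hM⟩ := h.bdd s
  refine ⟨M, fun t p hp j hj => ?_⟩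
  change ‖iteratedFDeriv ℝ j (_root_.fderiv ℝ (F t)) p‖ ≤ M
  rw [norm_iteratedFDeriv_fderiv]
  exact hM t p hp _ (by omega)

theorem Nice.pull {W' : Dm E' κ'} {F : ι → E' → G} (h : Nice r W' F) (L : E →L[ℝ] E')
    (hm : Set.MapsTo L W.U W'.U) (hS : ∀ s, ∃ s', Set.MapsTo L (W.S s) (W'.S s')) :
    Nice r W (fun t p => F t (L p)) := by
  refine ⟨fun t => (h.smooth t).comp L.contDiff.contDiffOn hm, fun s => ?_⟩
  obtain ⟨s', hs'⟩ := hS s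
  obtain ⟨M, hM⟩ := h.bdd s'
  set D := max 1 ‖L‖ with hD
  have hD1 : 1 ≤ D := le_max_left _ _
  refine ⟨|M| * D ^ r, fun t p hp j hj => ?_⟩
  have hop : IsOpen (L ⁻¹' W'.U) := W'.op.preimage L.continuous
  have hq : L p ∈ W'.U := W'.sub s' (hs' hp)
  have key := L.iteratedFDerivWithin_comp_right (h.smooth t) W'.op.uniqueDiffOn
    hop.uniqueDiffOn (x := p) hq (i := j) (by exact_mod_cast hj)
  rw [iteratedFDerivWithin_of_isOpen j hop hq, iteratedFDerivWithin_of_isOpen j W'.op hq] at key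
  change ‖iteratedFDeriv ℝ j (F t ∘ L) p‖ ≤ _
  rw [key]
  refine (ContinuousMultilinearMap.norm_compContinuousLinearMap_le _ _).trans ?_
  simp only [Finset.prod_const, Finset.card_univ, Fintype.card_fin]
  gcongr
  · exact (hM t _ (hs' hp) j hj).trans (le_abs_self _)
  · exact (pow_le_pow_left₀ (norm_nonneg _) (le_max_right _ _) _).trans
      (pow_le_pow_right₀ hD1 hj)

theorem Nice.lin (L : E →L[ℝ] G) (hS : ∀ s, ∃ M : ℝ, ∀ p ∈ W.S s, ‖L p‖ ≤ M) :
    Nice r W (fun (_ : ι) p => L p) := by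
  refine ⟨fun t => L.contDiff.contDiffOn, fun s => ?_⟩
  obtain ⟨M, hM⟩ := hS s
  refine ⟨max M ‖L‖, fun t p hp j hj => ?_⟩
  rcases j with _ | j
  · rw [norm_iteratedFDeriv_zero]; exact (hM p hp).trans (le_max_left _ _)
  · rw [← norm_iteratedFDeriv_fderiv]
    have : (_root_.fderiv ℝ (fun p => L p)) = fun _ => L := by ext1 p; exact L.fderiv
    rw [this]
    refine le_trans ?_ (le_max_right _ _)
    rcases j with _ | j
    · simp
    · rw [iteratedFDeriv_const_of_ne (by omega)]; simp

end NiceCalc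

section Inverse

variable {I : Type*} [Fintype I] [DecidableEq I]

theorem contDiff_det {E : Type*} [NormedAddCommGroup E] [NormedSpace ℝ E] {r : ℕ}
    (A : E → Matrix I I ℝ) (hA : ∀ i j, ContDiff ℝ r (fun p => A p i j)) :
    ContDiff ℝ r (fun p => (A p).det) := by
  simp only [Matrix.det_apply']
  exact ContDiff.sum fun s _ => contDiff_const.mul (contDiff_prod fun i _ => hA _ _)

theorem contDiffOn_inv {r : ℕ} (a b : I) :
    ContDiffOn ℝ r (fun N : I → I → ℝ => (1 - Matrix.of N : Matrix I I ℝ)⁻¹ a b)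
      {N | (1 - Matrix.of N : Matrix I I ℝ).det ≠ 0} := by
  have hent : ∀ i j, ContDiff ℝ r (fun N : I → I → ℝ => (1 - Matrix.of N : Matrix I I ℝ) i j) := by
    intro i j
    simp only [Matrix.sub_apply, Matrix.of_apply]
    fun_prop
  simp only [Matrix.inv_def, Ring.inverse_eq_inv', Matrix.smul_apply, smul_eq_mul,
    Matrix.adjugate_apply]
  refine ContDiffOn.mul (ContDiffOn.inv (contDiff_det _ hent).contDiffOn fun N hN => hN) ?_
  refine (contDiff_det _ fun i j => ?_).contDiffOn
  simp only [Matrix.updateRow_apply]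
  split_ifs
  · exact contDiff_const
  · exact hent i j

/-- Matrices whose Euclidean operator norm is at most `c`. -/
def KN (I : Type*) [Fintype I] (c : ℝ) : Set (I → I → ℝ) :=
  {N | ∀ v : I → ℝ, ∑ a, (∑ b, N a b * v b) ^ 2 ≤ c ^ 2 * ∑ b, v b ^ 2}

theorem KN_det {c : ℝ} (h0 : 0 ≤ c) (h1 : c < 1) {N : I → I → ℝ} (hN : N ∈ KN I c) :
    (1 - Matrix.of N : Matrix I I ℝ).det ≠ 0 := by
  intro h
  obtain ⟨v, hv, hv0⟩ := Matrix.exists_mulVec_eq_zero_iff.2 h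
  rw [Matrix.sub_mulVec, Matrix.one_mulVec, sub_eq_zero] at hv0
  have h2 := hN v
  have h3 : ∀ a, ∑ b, N a b * v b = v a := fun a => by
    conv_rhs => rw [hv0]
    simp [Matrix.mulVec, dotProduct]
  simp only [h3] at h2
  have h4 : 0 < ∑ b, v b ^ 2 := by
    obtain ⟨b, hb⟩ := Function.ne_iff.1 hv
    exact Finset.sum_pos' (fun _ _ => sq_nonneg _) ⟨b, Finset.mem_univ _, by
      have : v b ≠ 0 := hb
      positivity⟩
  have h5 : c ^ 2 < 1 := by nlinarith
  nlinarith

theorem KN_compact {c : ℝ} (h0 : 0 ≤ c) : IsCompact (KN I c) := by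
  refine Metric.isCompact_of_isClosed_isBounded ?_ ?_
  · have : KN I c = ⋂ v : I → ℝ,
        {N | ∑ a, (∑ b, N a b * v b) ^ 2 ≤ c ^ 2 * ∑ b, v b ^ 2} := by
      ext N; simp [KN]
    rw [this]
    exact isClosed_iInter fun v => isClosed_le (by fun_prop) (by fun_prop)
  · refine (Metric.isBounded_closedBall (x := 0) (r := c)).subset fun N hN => ?_
    rw [mem_closedBall_zero_iff, pi_norm_le_iff_of_nonneg h0]
    intro a
    rw [pi_norm_le_iff_of_nonneg h0]
    intro b
    have := hN (Pi.single b 1)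
    simp only [Pi.single_apply, mul_ite, mul_one, mul_zero, Finset.sum_ite_eq',
      Finset.mem_univ, if_true, ite_pow, one_pow, ne_eq, OfNat.ofNat_ne_zero,
      not_false_eq_true, zero_pow] at this
    have h2 := Finset.single_le_sum (f := fun a => N a b ^ 2) (fun _ _ => sq_nonneg _)
      (Finset.mem_univ a)
    exact abs_le_of_sq_le_sq (h2.trans this) h0

end Inverse

theorem opN_nonneg (y : Tens n m 1) : 0 ≤ opN y := norm_nonneg _

theorem opN_continuous : Continuous (opN : Tens n m 1 → ℝ) := by
  let L : Tens n m 1 →ₗ[ℝ] (EuclideanSpace ℝ (Fin n) →L[ℝ] EuclideanSpace ℝ (Fin m)) :=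
    { toFun := fun v => LinearMap.toContinuousLinearMap (Matrix.toEuclideanLin (mat1 v))
      map_add' := fun u v => by
        rw [← map_add, ← map_add]; rfl
      map_smul' := fun c v => by
        rw [RingHom.id_apply, ← map_smul, ← map_smul]; rfl }
  exact continuous_norm.comp L.continuous_of_finiteDimensional

theorem opN_bound (y : Tens n m 1) (s : Fin n → ℝ) :
    ∑ a, (∑ i, mat1 y a i * s i) ^ 2 ≤ opN y ^ 2 * ∑ i, s i ^ 2 := by
  have h := (LinearMap.toContinuousLinearMap (Matrix.toEuclideanLin (mat1 y))).le_opNorm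
    (WithLp.toLp 2 s)
  have h2 := pow_le_pow_left₀ (norm_nonneg _) h 2
  rw [mul_pow, EuclideanSpace.norm_sq_eq, EuclideanSpace.norm_sq_eq] at h2
  simpa [opN, Matrix.toLpLin_apply, Matrix.mulVec, dotProduct] using h2

theorem frobS_continuous : Continuous (frobS : Sig n d → ℝ) := by
  unfold frobS; fun_prop

theorem frobTZ_continuous {k : ℕ} : Continuous (frobTZ : TensZ n m d k → ℝ) := by
  unfold frobTZ; fun_prop

theorem frobS_smul (c : ℝ) (s : Sig n d) : frobS (c • s) = |c| * frobS s := by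
  unfold frobS
  simp only [Pi.smul_apply, smul_eq_mul, mul_pow, ← Finset.mul_sum]
  rw [Real.sqrt_mul (sq_nonneg _), Real.sqrt_sq_eq_abs]

theorem frobTZ_smul {k : ℕ} (c : ℝ) (s : TensZ n m d k) : frobTZ (c • s) = |c| * frobTZ s := by
  unfold frobTZ
  simp only [Pi.smul_apply, smul_eq_mul, mul_pow, ← Finset.mul_sum]
  rw [Real.sqrt_mul (sq_nonneg _), Real.sqrt_sq_eq_abs]

theorem sz_bound {σ : ℝ → Arg n m d → Sig n d} {t Lz : ℝ} {p : Arg n m d}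
    (hd : DifferentiableAt ℝ (σ t) p)
    (hl : ∀ (x : Fin n → ℝ) (y : Tens n m 0) (z z' : TensZ n m d 0),
      frobS (σ t (x, y, z) - σ t (x, y, z')) ≤ Lz * frobTZ (z - z'))
    (ζ : TensZ n m d 0) : frobS (sz σ t p ζ) ≤ Lz * frobTZ ζ := by
  have h1 : HasDerivAt (fun h : ℝ => σ t (p + h • ((0, 0, ζ) : Arg n m d))) (sz σ t p ζ) 0 := by
    have := hd.hasFDerivAt.hasLineDerivAt ((0, 0, ζ) : Arg n m d)
    exact this
  have h2 := hasDerivAt_iff_tendsto_slope.1 h1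
  refine le_of_tendsto ((frobS_continuous.tendsto _).comp h2) ?_
  filter_upwards [self_mem_nhdsWithin] with h hh
  have hh' : h ≠ 0 := hh
  have e : ∀ h : ℝ, p + h • ((0, 0, ζ) : Arg n m d) = (p.1, p.2.1, p.2.2 + h • ζ) := by
    intro h; ext <;> simp
  simp only [Function.comp, slope_def_module, frobS_smul, e, sub_zero]
  have h3 := hl p.1 p.2.1 (p.2.2 + h • ζ) (p.2.2 + (0:ℝ) • ζ)
  rw [zero_smul, add_zero, add_sub_cancel_left, frobTZ_smul] at h3
  rw [zero_smul, add_zero]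
  rw [abs_inv, inv_mul_le_iff₀ (abs_pos.2 hh')]
  linarith

/-- The generalized matrix `y⁽¹⁾σ_z(θ)`. -/
noncomputable def Nm (σ : ℝ → Arg n m d → Sig n d) (t : ℝ) (p : Arg n m d)
    (y1 : Tens n m 1) : (Fin m × Fin d) → (Fin m × Fin d) → ℝ :=
  fun ab pq => ∑ i, mat1 y1 ab.1 i * sz σ t p (eZ pq.1 pq.2) i ab.2

theorem Gmat_eq (σ : ℝ → Arg n m d → Sig n d) (t : ℝ) (p : Arg n m d)
    (y1 : Tens n m 1) : Gmat σ t p y1 = 1 - Matrix.of (Nm σ t p y1) := rfl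

theorem Nm_mem {σ : ℝ → Arg n m d → Sig n d} {t Lz : ℝ} {p : Arg n m d}
    (hd : DifferentiableAt ℝ (σ t) p) (hLz : 0 ≤ Lz)
    (hl : ∀ (x : Fin n → ℝ) (y : Tens n m 0) (z z' : TensZ n m d 0),
      frobS (σ t (x, y, z) - σ t (x, y, z')) ≤ Lz * frobTZ (z - z'))
    (y1 : Tens n m 1) {c : ℝ} (hc : Lz * opN y1 ≤ c) :
    Nm σ t p y1 ∈ KN (Fin m × Fin d) c := by
  intro v
  set ζ : TensZ n m d 0 := fun a b _ => v (a, b) with hζ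
  have hz : sz σ t p ζ = ∑ pq : Fin m × Fin d, v pq • sz σ t p (eZ pq.1 pq.2) := by
    have : ((0, 0, ζ) : Arg n m d) = ∑ pq : Fin m × Fin d, v pq • (0, 0, eZ pq.1 pq.2) := by
      refine Prod.ext (by simp [Prod.fst_sum]) (Prod.ext (by simp [Prod.fst_sum, Prod.snd_sum]) ?_)
      simp only [Prod.snd_sum, Prod.smul_snd]
      ext a b c
      simp only [Finset.sum_apply, Pi.smul_apply, eZ, smul_eq_mul, mul_ite, mul_one, mul_zero]
      rw [Finset.sum_eq_single (a, b)]
      · simp [hζ]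
      · rintro ⟨a', b'⟩ _ hne
        rw [if_neg]
        rintro ⟨h1, h2⟩
        exact hne (by simp at h1 h2; rw [h1, h2])
      · simp
    unfold sz
    rw [this, map_sum]
    simp only [map_smul]
  have hN : ∀ ab : Fin m × Fin d, ∑ pq, Nm σ t p y1 ab pq * v pq
      = ∑ i, mat1 y1 ab.1 i * sz σ t p ζ i ab.2 := by
    intro ab
    rw [hz]
    simp only [Nm, Finset.sum_apply, Pi.smul_apply, smul_eq_mul, Finset.mul_sum, Finset.sum_mul]
    rw [Finset.sum_comm]
    refine Finset.sum_congr rfl fun i _ => Finset.sum_congr rfl fun pq _ => by ring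
  simp only [hN]
  have hs := sz_bound hd hl ζ
  have hs2 : ∑ i, ∑ j, sz σ t p ζ i j ^ 2 ≤ Lz ^ 2 * ∑ b, v b ^ 2 := by
    unfold frobS frobTZ at hs
    have h2 := pow_le_pow_left₀ (Real.sqrt_nonneg _) hs 2
    rw [mul_pow, Real.sq_sqrt (by positivity), Real.sq_sqrt (by positivity)] at h2
    refine h2.trans_eq ?_
    simp [hζ, Fintype.sum_prod_type]
  rw [Fintype.sum_prod_type, Finset.sum_comm]
  have h0 := opN_nonneg y1
  calc ∑ b, ∑ a, (∑ i, mat1 y1 a i * sz σ t p ζ i b) ^ 2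
      ≤ ∑ b, opN y1 ^ 2 * ∑ i, sz σ t p ζ i b ^ 2 :=
        Finset.sum_le_sum fun b _ => opN_bound y1 _
    _ = opN y1 ^ 2 * ∑ i, ∑ b, sz σ t p ζ i b ^ 2 := by
        rw [← Finset.mul_sum, Finset.sum_comm]
    _ ≤ opN y1 ^ 2 * (Lz ^ 2 * ∑ b, v b ^ 2) := by gcongr
    _ = (Lz * opN y1) ^ 2 * ∑ b, v b ^ 2 := by ring
    _ ≤ c ^ 2 * ∑ b, v b ^ 2 := by
        have : 0 ≤ Lz * opN y1 := by positivity
        gcongr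

section Pieces

variable {ι κ E : Type*} [NormedAddCommGroup E] [NormedSpace ℝ E] {r : ℕ} {W : Dm E κ}
  {τ : ι → ℝ} {σ : ℝ → Arg n m d → Sig n d} {μ : ℝ → Arg n m d → (Fin n → ℝ)}
  {q : E → Arg n m d} {Y1 : E → Tens n m 1} {Z1 : E → TensZ n m d 1}

theorem nice_sx (hσ : Nice r W (fun t p => fderiv ℝ (σ (τ t)) (q p))) (v : Fin n → ℝ)
    (i : Fin n) (b : Fin d) : Nice r W (fun t p => sx σ (τ t) (q p) v i b) :=
  ((hσ.clm_apply (Nice.const ((v, 0, 0) : Arg n m d))).app i).app b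

theorem nice_sy (hσ : Nice r W (fun t p => fderiv ℝ (σ (τ t)) (q p))) (v : Tens n m 0)
    (i : Fin n) (b : Fin d) : Nice r W (fun t p => sy σ (τ t) (q p) v i b) :=
  ((hσ.clm_apply (Nice.const ((0, v, 0) : Arg n m d))).app i).app b

theorem nice_sz (hσ : Nice r W (fun t p => fderiv ℝ (σ (τ t)) (q p))) (v : TensZ n m d 0)
    (i : Fin n) (b : Fin d) : Nice r W (fun t p => sz σ (τ t) (q p) v i b) :=
  ((hσ.clm_apply (Nice.const ((0, 0, v) : Arg n m d))).app i).app b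

theorem nice_mx (hμ : Nice r W (fun t p => fderiv ℝ (μ (τ t)) (q p))) (v : Fin n → ℝ)
    (i : Fin n) : Nice r W (fun t p => mx μ (τ t) (q p) v i) :=
  (hμ.clm_apply (Nice.const ((v, 0, 0) : Arg n m d))).app i

theorem nice_my (hμ : Nice r W (fun t p => fderiv ℝ (μ (τ t)) (q p))) (v : Tens n m 0)
    (i : Fin n) : Nice r W (fun t p => my μ (τ t) (q p) v i) :=
  (hμ.clm_apply (Nice.const ((0, v, 0) : Arg n m d))).app i

theorem nice_mz (hμ : Nice r W (fun t p => fderiv ℝ (μ (τ t)) (q p))) (v : TensZ n m d 0)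
    (i : Fin n) : Nice r W (fun t p => mz μ (τ t) (q p) v i) :=
  (hμ.clm_apply (Nice.const ((0, 0, v) : Arg n m d))).app i

theorem nice_mat1 (hY : Nice r W (fun (_ : ι) p => Y1 p)) (a : Fin m) (i : Fin n) :
    Nice r W (fun (_ : ι) p => mat1 (Y1 p) a i) :=
  (hY.app a).app (fun _ => i)

theorem nice_Nm (hσ : Nice r W (fun t p => fderiv ℝ (σ (τ t)) (q p)))
    (hY : Nice r W (fun (_ : ι) p => Y1 p)) :
    Nice r W (fun t p => Nm σ (τ t) (q p) (Y1 p)) :=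
  Nice.pi fun ab => Nice.pi fun pq => Nice.sum _ fun i _ =>
    (nice_mat1 hY _ _).mul (nice_sz hσ _ _ _)

theorem nice_inv (hσ : Nice r W (fun t p => fderiv ℝ (σ (τ t)) (q p)))
    (hY : Nice r W (fun (_ : ι) p => Y1 p)) {Lz : ℝ} (hLz : 0 ≤ Lz)
    (hd : ∀ t p, DifferentiableAt ℝ (σ (τ t)) p)
    (hl : ∀ t, ∀ (x : Fin n → ℝ) (y : Tens n m 0) (z z' : TensZ n m d 0),
      frobS (σ (τ t) (x, y, z) - σ (τ t) (x, y, z')) ≤ Lz * frobTZ (z - z'))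
    (hU : ∀ p ∈ W.U, Lz * opN (Y1 p) < 1)
    (hS : ∀ s, ∃ c < 1, ∀ p ∈ W.S s, Lz * opN (Y1 p) ≤ c) (ab pq : Fin m × Fin d) :
    Nice r W (fun t p => (Gmat σ (τ t) (q p) (Y1 p))⁻¹ ab pq) := by
  simp only [Gmat_eq]
  refine (nice_Nm hσ hY).comp
    (g := fun N => (1 - Matrix.of N : Matrix (Fin m × Fin d) (Fin m × Fin d) ℝ)⁻¹ ab pq)
    ?_ (contDiffOn_inv ab pq) ?_ ?_
  · refine isOpen_ne_fun (ContDiff.continuous (𝕜 := ℝ) (n := (0 : ℕ))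
      (contDiff_det _ fun i j => ?_)) continuous_const
    simp only [Matrix.sub_apply, Matrix.of_apply]
    fun_prop
  · intro t p hp
    exact KN_det (mul_nonneg hLz (opN_nonneg _)) (hU p hp) (Nm_mem (hd t _) hLz (hl t) _ le_rfl)
  · intro s
    obtain ⟨c, hc, hcs⟩ := hS s
    refine ⟨KN _ (max c 0), fun N hN => KN_det (le_max_right _ _) (by simp [hc]) hN,
      KN_compact (le_max_right _ _), fun t p hp => ?_⟩
    exact Nm_mem (hd t _) hLz (hl t) _ ((hcs p hp).trans (le_max_left _ _))

theorem nice_h1 (hσ : Nice r W (fun t p => fderiv ℝ (σ (τ t)) (q p)))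
    (hY : Nice r W (fun (_ : ι) p => Y1 p)) (hZ : Nice r W (fun (_ : ι) p => Z1 p))
    (hG : ∀ ab pq, Nice r W (fun t p => (Gmat σ (τ t) (q p) (Y1 p))⁻¹ ab pq)) :
    Nice r W (fun t p => h1 σ (τ t) (q p) (Y1 p) (Z1 p)) := by
  refine Nice.pi fun a => Nice.pi fun b => Nice.pi fun c => Nice.sum _ fun pq _ =>
    (hG _ _).mul ?_
  refine ((Nice.sum _ fun i _ => (nice_mat1 hY _ _).mul (nice_sx hσ _ _ _)).add
    (Nice.sum _ fun j _ => (Nice.sum _ fun i _ =>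
      (nice_mat1 hY _ _).mul (nice_sy hσ _ _ _)).mul (nice_mat1 hY _ _))).add
    (((hZ.app _).app _).app _)

theorem nice_Bmat (hσ : Nice r W (fun t p => fderiv ℝ (σ (τ t)) (q p)))
    (hY : Nice r W (fun (_ : ι) p => Y1 p))
    (hh : Nice r W (fun t p => h1 σ (τ t) (q p) (Y1 p) (Z1 p))) (b : Fin d) :
    Nice r W (fun t p => Bmat σ (τ t) (q p) (Y1 p) (Z1 p) b) := by
  refine Nice.pi fun i => Nice.pi fun c => ?_
  exact ((nice_sx hσ _ _ _).add (Nice.sum _ fun a _ =>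
    (nice_sy hσ _ _ _).mul (nice_mat1 hY _ _))).add (Nice.sum _ fun pq _ =>
    (nice_sz hσ _ _ _).mul (((hh.app _).app _).app _))

theorem nice_Amat (hμ : Nice r W (fun t p => fderiv ℝ (μ (τ t)) (q p)))
    (hY : Nice r W (fun (_ : ι) p => Y1 p))
    (hh : Nice r W (fun t p => h1 σ (τ t) (q p) (Y1 p) (Z1 p))) :
    Nice r W (fun t p => Amat μ σ (τ t) (q p) (Y1 p) (Z1 p)) := by
  refine Nice.pi fun i => Nice.pi fun c => ?_
  exact ((nice_mx hμ _ _).add (Nice.sum _ fun a _ =>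
    (nice_my hμ _ _).mul (nice_mat1 hY _ _))).add (Nice.sum _ fun pq _ =>
    (nice_mz hμ _ _).mul (((hh.app _).app _).app _))

theorem nice_mulRight {k : ℕ} {y : ι → E → Tens n m (k + 1)} {A : ι → E → Fin n → Fin n → ℝ}
    (hy : Nice r W y) (hA : Nice r W A) : Nice r W (fun t p => mulRight (y t p) (A t p)) :=
  Nice.pi fun a => Nice.pi fun _ => Nice.sum _ fun j _ =>
    ((hy.app a).app _).mul ((hA.app j).app _)

theorem nice_hGen {k : ℕ} {yk : E → Tens n m (k + 1)} {zk : E → TensZ n m d (k + 1)}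
    (hσ : Nice r W (fun t p => fderiv ℝ (σ (τ t)) (q p)))
    (hyk : Nice r W (fun (_ : ι) p => yk p)) (hzk : Nice r W (fun (_ : ι) p => zk p))
    (hB : ∀ b, Nice r W (fun t p => Bmat σ (τ t) (q p) (Y1 p) (Z1 p) b))
    (hG : ∀ hk : k = 0, ∀ ab pq, Nice r W (fun t p =>
      (Gmat σ (τ t) (q p) (by subst hk; exact yk p))⁻¹ ab pq)) :
    Nice r W (fun t p => hGen σ (τ t) (q p) (Y1 p) (Z1 p) (yk p) (zk p)) := by
  cases k with
  | zero => exact nice_h1 hσ hyk hzk (hG rfl)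
  | succ k =>
    exact Nice.pi fun a => Nice.pi fun b => Nice.pi fun c => (((hzk.app a).app b).app c).add
      (((nice_mulRight hyk (hB b)).app a).app c)

theorem nice_appX {i : ℕ} {D : ι → E → (EE n m d i →L[ℝ] Tens n m i)} (hD : Nice r W D) :
    Nice r W (fun t p => appX (Dx (D t p))) :=
  Nice.pi fun a => Nice.pi fun _ =>
    ((hD.clm_apply (Nice.const ((_, 0, 0) : EE n m d i))).app a).app _

theorem nice_appY {i : ℕ} {D : ι → E → (EE n m d i →L[ℝ] Tens n m i)} (hD : Nice r W D)
    (j : Fin (i + 1)) {y : ι → E → Tens n m (j + 1)} (hy : Nice r W y) :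
    Nice r W (fun t p => appY (Dyp (D t p) j) (y t p)) := by
  refine Nice.pi fun a => Nice.pi fun c => ?_
  have h1 : Nice r W (fun t p => (fun a' c' => y t p a' (Fin.snoc c' (c (Fin.last i))) :
      Tens n m j)) := Nice.pi fun a' => Nice.pi fun c' => (hy.app a').app _
  have h2 := h1.clm (ContinuousLinearMap.single ℝ (fun j : Fin (i + 1) => Tens n m j) j)
  have h3 := (Nice.const (0 : Fin n → ℝ)).prodMk (h2.prodMk
    (Nice.const (0 : (j : Fin (i + 1)) → TensZ n m d j)))
  exact ((hD.clm_apply h3).app a).app _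

theorem nice_appZ {i : ℕ} {D : ι → E → (EE n m d i →L[ℝ] Tens n m i)} (hD : Nice r W D)
    (j : Fin (i + 1)) {z : ι → E → TensZ n m d (j + 1)} (hz : Nice r W z) :
    Nice r W (fun t p => appZ (Dzp (D t p) j) (z t p)) := by
  refine Nice.pi fun a => Nice.pi fun c => ?_
  have h1 : Nice r W (fun t p => (fun a' b' c' => z t p a' b' (Fin.snoc c' (c (Fin.last i))) :
      TensZ n m d j)) :=
    Nice.pi fun a' => Nice.pi fun b' => Nice.pi fun c' => ((hz.app a').app b').app _
  have h2 := h1.clm (ContinuousLinearMap.single ℝ (fun j : Fin (i + 1) => TensZ n m d j) j)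
  have h3 := (Nice.const (0 : Fin n → ℝ)).prodMk ((Nice.const
    (0 : (j : Fin (i + 1)) → Tens n m j)).prodMk h2)
  exact ((hD.clm_apply h3).app a).app _

end Pieces

section Domains

/-- The domain of `φ⁽ⁱ⁾` with the exhausting family of subsets. -/
def dom (n m d : ℕ) (Lz : ℝ) (i : ℕ) : Dm (EE n m d i) (ℝ × ℝ) where
  U := {p | ∀ hi : 1 ≤ i, Lz * opN (p.2.1 ⟨1, Nat.succ_le_succ hi⟩) < 1}
  S := fun s => {p | s.2 < 1 ∧ ‖p.2.2 ⟨0, by omega⟩‖ ≤ s.1 ∧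
    (∀ l : Fin (i + 1), 1 ≤ l.1 → ‖p.2.1 l‖ ≤ s.1 ∧ ‖p.2.2 l‖ ≤ s.1) ∧
    ∀ hi : 1 ≤ i, Lz * opN (p.2.1 ⟨1, Nat.succ_le_succ hi⟩) ≤ s.2}
  op := by
    by_cases hi : 1 ≤ i
    · simp only [hi, forall_true_left]
      refine isOpen_lt (continuous_const.mul (opN_continuous.comp ?_)) continuous_const
      exact (continuous_apply (A := fun j : Fin (i + 1) => Tens n m j) _).comp
        (continuous_fst.comp continuous_snd)
    · simp [hi]
  sub := fun s p hp hi => (hp.2.2.2 hi).trans_lt hp.1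

/-- The domain of the coefficients. -/
def argDom (n m d : ℕ) : Dm (Arg n m d) (ℝ × ℝ) where
  U := Set.univ
  S := fun s => {p | ‖p.2.2‖ ≤ s.1}
  op := isOpen_univ
  sub := fun _ => Set.subset_univ _

/-- The projection on `(x, y⁽⁰⁾, z⁽⁰⁾)`. -/
noncomputable def argL (n m d i : ℕ) : EE n m d i →L[ℝ] Arg n m d :=
  LinearMap.toContinuousLinearMap
    { toFun := fun p => (p.1, p.2.1 ⟨0, by omega⟩, p.2.2 ⟨0, by omega⟩)
      map_add' := fun _ _ => rfl
      map_smul' := fun _ _ => rfl }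

/-- The truncation `Θ_{i+1} → Θ_i`. -/
noncomputable def resL (n m d i : ℕ) : EE n m d (i + 1) →L[ℝ] EE n m d i :=
  LinearMap.toContinuousLinearMap
    { toFun := fun p => (p.1, fun j => p.2.1 j.castSucc, fun j => p.2.2 j.castSucc)
      map_add' := fun _ _ => rfl
      map_smul' := fun _ _ => rfl }

/-- The coordinate `y⁽ˡ⁾`. -/
noncomputable def yL (n m d i : ℕ) (l : Fin (i + 1)) : EE n m d i →L[ℝ] Tens n m l :=
  LinearMap.toContinuousLinearMap
    { toFun := fun p => p.2.1 l
      map_add' := fun _ _ => rfl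
      map_smul' := fun _ _ => rfl }

/-- The coordinate `z⁽ˡ⁾`. -/
noncomputable def zL (n m d i : ℕ) (l : Fin (i + 1)) : EE n m d i →L[ℝ] TensZ n m d l :=
  LinearMap.toContinuousLinearMap
    { toFun := fun p => p.2.2 l
      map_add' := fun _ _ => rfl
      map_smul' := fun _ _ => rfl }

variable {ι : Type*} {r : ℕ} {Lz : ℝ}

theorem nice_Y {i : ℕ} (l : Fin (i + 1)) (hl : 1 ≤ l.1) :
    Nice r (dom n m d Lz i) (fun (_ : ι) p => p.2.1 l) :=
  Nice.lin (yL n m d i l) fun s => ⟨s.1, fun _ hp => (hp.2.2.1 l hl).1⟩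

theorem nice_Z {i : ℕ} (l : Fin (i + 1)) (hl : 1 ≤ l.1) :
    Nice r (dom n m d Lz i) (fun (_ : ι) p => p.2.2 l) :=
  Nice.lin (zL n m d i l) fun s => ⟨s.1, fun _ hp => (hp.2.2.1 l hl).2⟩

theorem Nice.arg {G : Type*} [NormedAddCommGroup G] [NormedSpace ℝ G] {F : ι → Arg n m d → G}
    (h : Nice r (argDom n m d) F) (i : ℕ) :
    Nice r (dom n m d Lz i) (fun t p => F t (argL n m d i p)) :=
  h.pull (argL n m d i) (fun _ _ => Set.mem_univ _) fun s => ⟨s, fun _ hp => hp.2.1⟩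

theorem Nice.res {G : Type*} [NormedAddCommGroup G] [NormedSpace ℝ G] {i : ℕ}
    {F : ι → EE n m d i → G}
    (h : Nice r (dom n m d Lz i) F) :
    Nice r (dom n m d Lz (i + 1)) (fun t p => F t (resL n m d i p)) :=
  h.pull (resL n m d i) (fun _ hp hi => hp (by omega)) fun s => ⟨s, fun _ hp =>
    ⟨hp.1, hp.2.1, fun l hl => hp.2.2.1 l.castSucc hl, fun hi => hp.2.2.2 (by omega)⟩⟩

theorem nice_base {T : ℝ} {k : ℕ} {G : Type*} [NormedAddCommGroup G] [NormedSpace ℝ G]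
    {g : ℝ → Arg n m d → G} (hs : ∀ t ∈ Set.Icc (0:ℝ) T, ContDiff ℝ (k : ℕ∞) (g t))
    (hl : ∀ R : ℝ, ∃ L : NNReal, ∀ t ∈ Set.Icc (0:ℝ) T, ∀ j : ℕ, j ≤ k →
      LipschitzOnWith L (iteratedFDeriv ℝ j (g t)) {p : Arg n m d | frobTZ p.2.2 ≤ R})
    (hr : r + 1 ≤ k) :
    Nice r (argDom n m d) (fun (t : Set.Icc (0:ℝ) T) p => fderiv ℝ (g t) p) := by
  refine ⟨fun t => ((hs t t.2).fderiv_right (by exact_mod_cast hr)).contDiffOn, fun s => ?_⟩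
  obtain ⟨R, hR⟩ := (isCompact_closedBall (0 : TensZ n m d 0) s.1).exists_bound_of_continuousOn
    (frobTZ_continuous (n := n) (m := m) (d := d) (k := 0)).continuousOn
  obtain ⟨L, hL⟩ := hl (R + 1)
  refine ⟨L, fun t p hp j hj => ?_⟩
  change ‖iteratedFDeriv ℝ j (fderiv ℝ (g t)) p‖ ≤ L
  rw [norm_iteratedFDeriv_fderiv, ← norm_fderiv_iteratedFDeriv]
  refine norm_fderiv_le_of_lipschitzOn ℝ ?_ (hL t t.2 j (by omega))
  have h1 : frobTZ p.2.2 < R + 1 := by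
    have := hR p.2.2 (mem_closedBall_zero_iff.2 hp)
    linarith [le_abs_self (frobTZ p.2.2), Real.norm_eq_abs (frobTZ p.2.2)]
  have h2 : Continuous fun p : Arg n m d => frobTZ p.2.2 :=
    frobTZ_continuous.comp (continuous_snd.comp continuous_snd)
  filter_upwards [h2.continuousAt.eventually (gt_mem_nhds h1)] with q hq using le_of_lt hq

end Domains

/-- The functions `φ⁽ⁱ⁾`. -/
noncomputable def phi (μ : ℝ → Arg n m d → (Fin n → ℝ)) (σ : ℝ → Arg n m d → Sig n d)
    (f : ℝ → Arg n m d → Tens n m 0) : (i : ℕ) → PhiFun n m d i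
  | 0 => fun t p => f t (argL n m d 0 p)
  | i + 1 => fun t p =>
      phiStep μ σ t (fderiv ℝ (phi μ σ f i t) (resL n m d i p)) p.1 p.2.1 p.2.2

section Main

variable {T Lz : ℝ} {k : ℕ} {μ : ℝ → Arg n m d → (Fin n → ℝ)} {σ : ℝ → Arg n m d → Sig n d}
  {f : ℝ → Arg n m d → Tens n m 0}

theorem nice_step (hM : MLLC n m d k T μ σ f Lz) {i r : ℕ} (hr : r + 1 ≤ k)
    {D : Set.Icc (0:ℝ) T → EE n m d (i + 1) → (EE n m d i →L[ℝ] Tens n m i)}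
    (hD : Nice r (dom n m d Lz (i + 1)) D) :
    Nice r (dom n m d Lz (i + 1))
      (fun (t : Set.Icc (0:ℝ) T) p => phiStep μ σ (t : ℝ) (D t p) p.1 p.2.1 p.2.2) := by
  have hσ : Nice r (dom n m d Lz (i + 1))
      (fun (t : Set.Icc (0:ℝ) T) p => fderiv ℝ (σ t) (argL n m d (i + 1) p)) :=
    (nice_base hM.smooth_sigma (fun R => (hM.lipschitz_on_bounded R).imp
      fun L hL t ht j hj => (hL t ht j hj).2.1) hr).arg (i + 1)
  have hμ : Nice r (dom n m d Lz (i + 1))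
      (fun (t : Set.Icc (0:ℝ) T) p => fderiv ℝ (μ t) (argL n m d (i + 1) p)) :=
    (nice_base hM.smooth_mu (fun R => (hM.lipschitz_on_bounded R).imp
      fun L hL t ht j hj => (hL t ht j hj).1) hr).arg (i + 1)
  have hY : ∀ l : Fin (i + 2), 1 ≤ l.1 →
      Nice r (dom n m d Lz (i + 1)) (fun (_ : Set.Icc (0:ℝ) T) p => p.2.1 l) :=
    fun l hl => nice_Y l hl
  have hZ : ∀ l : Fin (i + 2), 1 ≤ l.1 →
      Nice r (dom n m d Lz (i + 1)) (fun (_ : Set.Icc (0:ℝ) T) p => p.2.2 l) :=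
    fun l hl => nice_Z l hl
  have hY1 : Nice r (dom n m d Lz (i + 1)) (fun (_ : Set.Icc (0:ℝ) T) p =>
      (p.2.1 ⟨1, by omega⟩ : Tens n m 1)) := hY ⟨1, by omega⟩ le_rfl
  have hZ1 : Nice r (dom n m d Lz (i + 1)) (fun (_ : Set.Icc (0:ℝ) T) p =>
      (p.2.2 ⟨1, by omega⟩ : TensZ n m d 1)) := hZ ⟨1, by omega⟩ le_rfl
  have hG : ∀ ab pq, Nice r (dom n m d Lz (i + 1)) (fun (t : Set.Icc (0:ℝ) T) p =>
      (Gmat σ (t : ℝ) (argL n m d (i + 1) p) (p.2.1 ⟨1, by omega⟩))⁻¹ ab pq) := by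
    refine nice_inv hσ hY1 hM.lz_nonneg (fun t p => ?_) (fun t => hM.lz_lipschitz t t.2)
      (fun p hp => hp (by omega)) (fun s => ?_)
    · exact ((hM.smooth_sigma t t.2).differentiable
        (by exact_mod_cast (by omega : k ≠ 0))).differentiableAt
    · by_cases hs : s.2 < 1
      · exact ⟨s.2, hs, fun p hp => hp.2.2.2 (by omega)⟩
      · exact ⟨0, one_pos, fun p hp => absurd hp.1 hs⟩
  have hh := nice_h1 hσ hY1 hZ1 hG
  have hB := nice_Bmat hσ hY1 hh
  have hA := nice_Amat hμ hY1 hh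
  refine (((nice_appX hD).add (Nice.sum _ fun j _ => (nice_appY hD j ?_).add
    (nice_appZ hD j ?_))).sub (nice_mulRight ?_ hA)).sub (Nice.sum _ fun b _ =>
      nice_mulRight ?_ (hB b))
  · exact hY j.succ (by simp)
  · refine nice_hGen hσ (hY j.succ (by simp)) (hZ j.succ (by simp)) hB ?_
    obtain ⟨_ | j, hj⟩ := j
    · intro _; exact hG
    · intro hk; simp at hk
  · exact hY (Fin.last (i + 1)) (by simp)
  · exact Nice.pi fun a => Nice.pi fun c => (((hZ (Fin.last (i + 1)) (by simp)).app a).app b).app c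

theorem phi_main (hM : MLLC n m d k T μ σ f Lz) (i : ℕ) (hi : i ≤ k) :
    (∀ t ∈ Set.Icc (0:ℝ) T, ContDiffOn ℝ ((k - i : ℕ) : ℕ∞) (phi μ σ f i t)
      (dom n m d Lz i).U) ∧
    (1 ≤ i → Nice (k - i) (dom n m d Lz i)
      (fun (t : Set.Icc (0:ℝ) T) p => phi μ σ f i t p)) ∧
    (i + 1 ≤ k → Nice (k - (i + 1)) (dom n m d Lz i)
      (fun (t : Set.Icc (0:ℝ) T) p => fderiv ℝ (phi μ σ f i t) p)) := by
  induction i with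
  | zero =>
    refine ⟨fun t ht => ?_, fun h => by omega, fun hk => ?_⟩
    · exact ((hM.smooth_f t ht).comp (argL n m d 0).contDiff).contDiffOn
    · have hf := (nice_base hM.smooth_f (fun R => (hM.lipschitz_on_bounded R).imp
        fun L hL t ht j hj => (hL t ht j hj).2.2) (r := k - (0 + 1)) (by omega)).arg
          (Lz := Lz) 0
      have h2 := hf.clm (((ContinuousLinearMap.compL ℝ (EE n m d 0) (Arg n m d)
        (Tens n m 0)).flip) (argL n m d 0))
      convert h2 using 3 with t p
      have hd : DifferentiableAt ℝ (f t) (argL n m d 0 p) :=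
        ((hM.smooth_f t t.2).differentiable
          (by exact_mod_cast (by omega : k ≠ 0))).differentiableAt
      exact (hd.hasFDerivAt.comp p (argL n m d 0).hasFDerivAt).fderiv
  | succ i ih =>
    have h := (ih (by omega)).2.2 hi
    have h2 : Nice (k - (i + 1)) (dom n m d Lz (i + 1))
      (fun (t : Set.Icc (0:ℝ) T) p => phi μ σ f (i + 1) t p) :=
      nice_step hM (by omega) h.res
    refine ⟨fun t ht => h2.smooth ⟨t, ht⟩, fun _ => h2, fun hk => ?_⟩
    have e : k - (i + 1) = k - (i + 1 + 1) + 1 := by omega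
    rw [e] at h2
    exact h2.fderiv

end Main

/-- **Lemma 6.1.**  Assume `(μ,σ,f)` satisfies `(k-MLLC)`.  Then for every `i ≤ k` the
function `φ⁽ⁱ⁾` is well defined on `Θ_i` (all partial derivatives occurring in the
recursive definition exist classically, which is the content of `IsPhiChain`) and is
`k−i` times classically differentiable with respect to
`(x, y⁽⁰⁾, z⁽⁰⁾, …, y⁽ⁱ⁾, z⁽ⁱ⁾)`.  Moreover, for `i ≥ 1`, `φ⁽ⁱ⁾` and all of these
derivatives up to order `k−i` are bounded on every set of the form
`[0,T]×ℝⁿ×ℝᵐ×A×∏_{l=1}^i (B_l×C_l)` with `A, B_l, C_l` compact and `B₁` contained in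
the open ball of radius `L_{σ,z}⁻¹` for the operator norm. -/
theorem phi_chain_exists_smooth_and_bounded
    {n m d : ℕ} {T : ℝ} (hT : 0 < T) (k : ℕ)
    (μ : ℝ → Arg n m d → (Fin n → ℝ)) (σ : ℝ → Arg n m d → Sig n d)
    (f : ℝ → Arg n m d → Tens n m 0) (Lz : ℝ)
    (hMLLC : MLLC n m d k T μ σ f Lz) :
    ∃ φ : (i : ℕ) → PhiFun n m d i,
      IsPhiChain n m d k T Lz μ σ f φ ∧
      (∀ i : ℕ, i ≤ k → ∀ t ∈ Set.Icc (0:ℝ) T,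
        ContDiffOn ℝ ((k - i : ℕ) : ℕ∞) (φ i t)
          {p : EE n m d i |
            ∀ hi : 1 ≤ i, Lz * opN (p.2.1 ⟨1, Nat.succ_le_succ hi⟩) < 1}) ∧
      (∀ i : ℕ, ∀ hi : 1 ≤ i, i ≤ k →
        ∀ A : Set (TensZ n m d 0), IsCompact A →
        ∀ (B : (l : Fin (i + 1)) → Set (Tens n m l))
          (C : (l : Fin (i + 1)) → Set (TensZ n m d l)),
        (∀ l : Fin (i + 1), 1 ≤ l.1 → IsCompact (B l) ∧ IsCompact (C l)) →
        (∀ v ∈ B ⟨1, Nat.succ_le_succ hi⟩, Lz * opN v < 1) →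
        ∃ M : ℝ, ∀ t ∈ Set.Icc (0:ℝ) T, ∀ p : EE n m d i,
          (p.2.2 ⟨0, by omega⟩ ∈ A ∧
            ∀ l : Fin (i + 1), 1 ≤ l.1 → p.2.1 l ∈ B l ∧ p.2.2 l ∈ C l) →
          ∀ j : ℕ, j ≤ k - i → ‖iteratedFDeriv ℝ j (φ i t) p‖ ≤ M) := by
  refine ⟨phi μ σ f, ⟨fun t ht p => rfl, ?_⟩, fun i hi => (phi_main hMLLC i hi).1, ?_⟩
  · intro i hi t ht x Y Z hY
    refine ⟨fderiv ℝ (phi μ σ f i t) (resL n m d i (x, Y, Z)), ?_, rfl⟩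
    have hmem : resL n m d i (x, Y, Z) ∈ (dom n m d Lz i).U := fun _ => hY
    have h := ((phi_main hMLLC i (by omega)).1 t ht).contDiffAt
      ((dom n m d Lz i).op.mem_nhds hmem)
    exact (h.differentiableAt (by exact_mod_cast (by omega : k - i ≠ 0))).hasFDerivAt
  · intro i hi hik A hA B C hBC hB
    obtain ⟨RA, hRA⟩ := hA.isBounded.exists_norm_le
    have hR : ∀ l : Fin (i + 1), ∃ R : ℝ, 1 ≤ l.1 →
        (∀ v ∈ B l, ‖v‖ ≤ R) ∧ ∀ v ∈ C l, ‖v‖ ≤ R := by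
      intro l
      by_cases hl : 1 ≤ l.1
      · obtain ⟨R1, h1⟩ := (hBC l hl).1.isBounded.exists_norm_le
        obtain ⟨R2, h2⟩ := (hBC l hl).2.isBounded.exists_norm_le
        exact ⟨max R1 R2, fun _ => ⟨fun v hv => (h1 v hv).trans (le_max_left _ _),
          fun v hv => (h2 v hv).trans (le_max_right _ _)⟩⟩
      · exact ⟨0, fun h => absurd h hl⟩
    choose R hR using hR
    have hc : ∃ c < 1, ∀ v ∈ B ⟨1, Nat.succ_le_succ hi⟩, Lz * opN v ≤ c := by
      rcases (B ⟨1, Nat.succ_le_succ hi⟩).eq_empty_or_nonempty with he | hne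
      · exact ⟨0, one_pos, fun v hv => by rw [he] at hv; exact hv.elim⟩
      · obtain ⟨v0, hv0, hmax⟩ := (hBC ⟨1, Nat.succ_le_succ hi⟩ le_rfl).1.exists_isMaxOn hne
          (f := fun v : Tens n m 1 => Lz * opN v)
          (continuous_const.mul opN_continuous).continuousOn
        exact ⟨_, hB v0 hv0, fun v hv => hmax hv⟩
    obtain ⟨c, hc1, hc⟩ := hc
    set R' := |RA| + ∑ l, |R l| with hR'
    have hsum : 0 ≤ ∑ l, |R l| := Finset.sum_nonneg fun _ _ => abs_nonneg _
    have hRl : ∀ l, R l ≤ R' := fun l => by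
      have := Finset.single_le_sum (f := fun l => |R l|) (fun _ _ => abs_nonneg _)
        (Finset.mem_univ l)
      have h2 := le_abs_self (R l)
      have h3 := abs_nonneg RA
      linarith
    obtain ⟨M, hM⟩ := ((phi_main hMLLC i hik).2.1 hi).bdd (R', c)
    refine ⟨M, fun t ht p hp j hj => hM ⟨t, ht⟩ p ⟨hc1, ?_, fun l hl => ⟨?_, ?_⟩, fun _ => ?_⟩ j hj⟩
    · have := hRA _ hp.1
      have h2 := le_abs_self RA
      change ‖p.2.2 ⟨0, by omega⟩‖ ≤ R'
      linarith
    · exact ((hR l hl).1 _ (hp.2 l hl).1).trans (hRl l)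
    · exact ((hR l hl).2 _ (hp.2 l hl).2).trans (hRl l)
    · exact hc _ (hp.2 ⟨1, Nat.succ_le_succ hi⟩ le_rfl).1

end DecouplingFBSDE
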